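/- arXiv:1211.1555 — 5 statements merged into one kernel-verified Lean document; each statement's English description precedes it below -/
import Mathlib

section
/- Let C be a closed symmetric monoidal category, let (D_i)_{i ∈ I} be a family of closed symmetric monoidal categories, and let F_i : C ⥤ D_i be strong monoidal functors each of which is closed, i.e. for all objects X, Y of C the canonical comparison morphism F_i([X, Y]) ⟶ [F_i X, F_i Y] between internal homs is an isomorphism. Assume the family (F_i) is jointly conservative: a morphism g of C is an isomorphism whenever F_i(g) is an isomorphism for every i ∈ I. If M is an object of C such that F_i(M) has a right dual in D_i for every i ∈ I, then M has a right dual in C. -/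
open CategoryTheory CategoryTheory.MonoidalCategory CategoryTheory.MonoidalClosed

/-- The canonical comparison morphism `F([X, Y]) ⟶ [F X, F Y]` between internal homs,
for a (lax) monoidal functor `F` between monoidal closed categories. -/
noncomputable def ihomComparison {C D : Type*} [Category C] [Category D]
    [MonoidalCategory C] [MonoidalCategory D] [MonoidalClosed C] [MonoidalClosed D]
    (F : C ⥤ D) [F.LaxMonoidal] (X Y : C) :
    F.obj ((ihom X).obj Y) ⟶ (ihom (F.obj X)).obj (F.obj Y) :=
  MonoidalClosed.curry
    (Functor.LaxMonoidal.μ F X ((ihom X).obj Y) ≫ F.map ((ihom.ev X).app Y))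

/-!
An object `X` of a closed monoidal category has a left dual if and only if the canonical map
`[X, 𝟙] ⊗ X ⟶ [X, X]` is an isomorphism. Up to the invertible comparison morphisms, a closed strong
monoidal functor `F` carries this map for `X` to the corresponding map for `F X`, so a jointly
conservative family of such functors detects whether it is invertible. In a braided category left
and right duals are interchangeable.
-/

section Pairing

variable {C : Type*} [Category C] [MonoidalCategory C] {X X' : C} [Closed X]

/-- The map `X' ⊗ Y ⟶ [X, Y]` induced by a pairing `e : X ⊗ X' ⟶ 𝟙`. For `e` the evaluation
`X ⊗ [X, 𝟙] ⟶ 𝟙` it is the canonical map `[X, 𝟙] ⊗ Y ⟶ [X, Y]`, whose invertibility at `Y = X`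
characterizes dualizability of `X`. -/
noncomputable def tensorToIhom (e : X ⊗ X' ⟶ 𝟙_ C) (Y : C) : X' ⊗ Y ⟶ (ihom X).obj Y :=
  curry ((α_ X X' Y).inv ≫ e ▷ Y ≫ (λ_ Y).hom)

theorem whiskerRight_comp_tensorToIhom {X'' : C} (c : X'' ⟶ X') (e : X ⊗ X' ⟶ 𝟙_ C) (Y : C) :
    c ▷ Y ≫ tensorToIhom e Y = tensorToIhom (X ◁ c ≫ e) Y := by
  rw [tensorToIhom, tensorToIhom, ← curry_natural_left, associator_inv_naturality_middle_assoc,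
    comp_whiskerRight_assoc]

theorem curry_whiskerRight_comp_tensorToIhom_ev (e : X ⊗ X' ⟶ 𝟙_ C) (Y : C) :
    curry e ▷ Y ≫ tensorToIhom ((ihom.ev X).app (𝟙_ C)) Y = tensorToIhom e Y := by
  rw [whiskerRight_comp_tensorToIhom, whiskerLeft_curry_ihom_ev_app]

theorem tensorToIhom_unit (e : X ⊗ X' ⟶ 𝟙_ C) :
    tensorToIhom e (𝟙_ C) = (ρ_ X').hom ≫ curry e := by
  rw [tensorToIhom, ← curry_natural_left, unitors_equal, rightUnitor_naturality,
    rightUnitor_tensor_hom_assoc, Iso.inv_hom_id_assoc]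

theorem isIso_curry_counit_app {G : C ⥤ C} (adj : tensorLeft X ⊣ G) (Y : C) :
    IsIso (curry (adj.counit.app Y)) := by
  have curry_counit : curry (adj.counit.app Y) =
      (adj.rightAdjointUniq (ihom.adjunction X)).hom.app Y := by
    rw [curry_eq_iff, uncurry_eq]
    exact (adj.rightAdjointUniq_hom_app_counit (ihom.adjunction X) Y).symm
  rw [curry_counit]
  infer_instance

theorem isIso_tensorToIhom_evaluation [ExactPairing X' X] (Y : C) :
    IsIso (tensorToIhom (ε_ X' X) Y) := by
  have counit_app : (tensorLeftAdjunction X' X).counit.app Y =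
      (α_ X X' Y).inv ≫ ε_ X' X ▷ Y ≫ (λ_ Y).hom := by
    simp [tensorLeftAdjunction, tensorLeftHomEquiv]
  rw [tensorToIhom, ← counit_app]
  exact isIso_curry_counit_app (tensorLeftAdjunction X' X) Y

theorem isIso_curry_evaluation [ExactPairing X' X] : IsIso (curry (ε_ X' X)) := by
  rw [← isIso_comp_left_iff (ρ_ X').hom, ← tensorToIhom_unit]
  exact isIso_tensorToIhom_evaluation (𝟙_ C)

theorem isIso_tensorToIhom_ev [HasLeftDual X] (Y : C) :
    IsIso (tensorToIhom ((ihom.ev X).app (𝟙_ C)) Y) := by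
  have := isIso_curry_evaluation (X := X) (X' := ᘁX)
  rw [← isIso_comp_left_iff (curry (ε_ (ᘁX) X) ▷ Y), curry_whiskerRight_comp_tensorToIhom_ev]
  exact isIso_tensorToIhom_evaluation Y

theorem comp_tensorToIhom_eq_id_iff (e : X ⊗ X' ⟶ 𝟙_ C) (coev : 𝟙_ C ⟶ X' ⊗ X) :
    coev ≫ tensorToIhom e X = MonoidalClosed.id X ↔
      X ◁ coev ≫ (α_ X X' X).inv ≫ e ▷ X = (ρ_ X).hom ≫ (λ_ X).inv := by
  rw [tensorToIhom, ← curry_natural_left, MonoidalClosed.id_eq, curry_injective.eq_iff,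
    Iso.eq_comp_inv]
  simp only [Category.assoc]

theorem evaluation_coevaluation_of_coevaluation_evaluation (e : X ⊗ X' ⟶ 𝟙_ C) [Mono (curry e)]
    (coev : 𝟙_ C ⟶ X' ⊗ X)
    (zigzag : X ◁ coev ≫ (α_ X X' X).inv ≫ e ▷ X = (ρ_ X).hom ≫ (λ_ X).inv) :
    coev ▷ X' ≫ (α_ X' X X').hom ≫ X' ◁ e = (λ_ X').hom ≫ (ρ_ X').inv := by
  -- As `curry e` is monic, endomorphisms of `X'` may be compared after pairing them with `X`.
  rw [Iso.eq_comp_inv, ← cancel_mono (curry e), ← curry_natural_left, ← curry_natural_left]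
  congr 1
  calc
    _ = X ◁ coev ▷ X' ⊗≫ ((X ⊗ X') ◁ e ≫ e ▷ 𝟙_ C) ⊗≫ 𝟙 (𝟙_ C) := by monoidal
    _ = X ◁ coev ▷ X' ⊗≫ (e ▷ (X ⊗ X') ≫ 𝟙_ C ◁ e) ⊗≫ 𝟙 (𝟙_ C) := by rw [whisker_exchange]
    _ = 𝟙 _ ⊗≫ (X ◁ coev ≫ (α_ X X' X).inv ≫ e ▷ X) ▷ X' ⊗≫ e := by monoidal
    _ = X ◁ (λ_ X').hom ≫ e := by rw [zigzag]; monoidal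

theorem nonempty_exactPairing_of_isIso_tensorToIhom (e : X ⊗ X' ⟶ 𝟙_ C) [Mono (curry e)]
    [IsIso (tensorToIhom e X)] : Nonempty (ExactPairing X' X) := by
  -- The coevaluation is the name of `𝟙 X`, transported along `X' ⊗ X ≅ [X, X]`.
  let coev : 𝟙_ C ⟶ X' ⊗ X := MonoidalClosed.id X ≫ inv (tensorToIhom e X)
  have zigzag := (comp_tensorToIhom_eq_id_iff e coev).1 (by simp [coev])
  exact ⟨⟨coev, e, zigzag, evaluation_coevaluation_of_coevaluation_evaluation e coev zigzag⟩⟩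

variable (X) in
theorem nonempty_hasLeftDual_iff_isIso_tensorToIhom_ev :
    Nonempty (HasLeftDual X) ↔ IsIso (tensorToIhom ((ihom.ev X).app (𝟙_ C)) X) := by
  refine ⟨fun ⟨_⟩ => isIso_tensorToIhom_ev X, fun _ => ?_⟩
  have curry_ev : curry ((ihom.ev X).app (𝟙_ C)) = 𝟙 _ := by
    rw [curry_eq_iff]
    exact (uncurry_id_eq_ev X (𝟙_ C)).symm
  have : Mono (curry ((ihom.ev X).app (𝟙_ C))) := by rw [curry_ev]; infer_instance
  obtain ⟨_⟩ := nonempty_exactPairing_of_isIso_tensorToIhom ((ihom.ev X).app (𝟙_ C))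
  exact ⟨⟨(ihom X).obj (𝟙_ C)⟩⟩

end Pairing

section Functor

open Functor.LaxMonoidal Functor.OplaxMonoidal

variable {C D : Type*} [Category C] [Category D] [MonoidalCategory C] [MonoidalCategory D]
  [MonoidalClosed C] [MonoidalClosed D]

theorem curry_μ_comp_map (F : C ⥤ D) [F.LaxMonoidal] {X Y Z : C} (f : X ⊗ Z ⟶ Y) :
    curry (μ F X Z ≫ F.map f) = F.map (curry f) ≫ ihomComparison F X Y := by
  rw [ihomComparison, ← curry_natural_left, μ_natural_right_assoc, ← F.map_comp,
    whiskerLeft_curry_ihom_ev_app]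

theorem map_tensorToIhom_comp_ihomComparison (F : C ⥤ D) [F.Monoidal] {X X' : C}
    (e : X ⊗ X' ⟶ 𝟙_ C) (Y : C) :
    μ F X' Y ≫ F.map (tensorToIhom e Y) ≫ ihomComparison F X Y =
      tensorToIhom (μ F X X' ≫ F.map e ≫ η F) (F.obj Y) := by
  rw [tensorToIhom, tensorToIhom, ← curry_μ_comp_map, ← curry_natural_left]
  simp

theorem curry_μ_comp_map_ev_comp_η (F : C ⥤ D) [F.Monoidal] (X : C) :
    curry (μ F X _ ≫ F.map ((ihom.ev X).app (𝟙_ C)) ≫ η F) =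
      ihomComparison F X (𝟙_ C) ≫ (ihom (F.obj X)).map (η F) := by
  rw [ihomComparison, ← curry_natural_right, Category.assoc]

theorem isIso_map_tensorToIhom_ev_iff (F : C ⥤ D) [F.Monoidal] (X Y : C)
    [IsIso (ihomComparison F X (𝟙_ C))] [IsIso (ihomComparison F X Y)] :
    IsIso (F.map (tensorToIhom ((ihom.ev X).app (𝟙_ C)) Y)) ↔
      IsIso (tensorToIhom ((ihom.ev (F.obj X)).app (𝟙_ D)) (F.obj Y)) := by
  rw [← isIso_comp_right_iff _ (ihomComparison F X Y), ← isIso_comp_left_iff (μ F _ Y),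
    map_tensorToIhom_comp_ihomComparison, ← curry_whiskerRight_comp_tensorToIhom_ev,
    curry_μ_comp_map_ev_comp_η, isIso_comp_left_iff]

end Functor

theorem nonempty_hasLeftDual_of_jointlyReflectIsomorphisms {C : Type*} [Category C]
    [MonoidalCategory C] [MonoidalClosed C] {I : Type*} {D : I → Type*} [∀ i, Category (D i)]
    [∀ i, MonoidalCategory (D i)] [∀ i, MonoidalClosed (D i)]
    {F : ∀ i, C ⥤ D i} [∀ i, (F i).Monoidal] (hF : JointlyReflectIsomorphisms F) (M : C)
    [∀ i, IsIso (ihomComparison (F i) M (𝟙_ C))] [∀ i, IsIso (ihomComparison (F i) M M)]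
    (hM : ∀ i, Nonempty (HasLeftDual ((F i).obj M))) :
    Nonempty (HasLeftDual M) := by
  rw [nonempty_hasLeftDual_iff_isIso_tensorToIhom_ev, hF.isIso_iff]
  intro i
  rw [isIso_map_tensorToIhom_ev_iff]
  exact (nonempty_hasLeftDual_iff_isIso_tensorToIhom_ev _).1 (hM i)

theorem nonempty_hasLeftDual_iff_nonempty_hasRightDual {C : Type*} [Category C]
    [MonoidalCategory C] [BraidedCategory C] (X : C) :
    Nonempty (HasLeftDual X) ↔ Nonempty (HasRightDual X) :=
  ⟨fun ⟨_⟩ => ⟨BraidedCategory.hasRightDualOfHasLeftDual⟩,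
    fun ⟨_⟩ => ⟨BraidedCategory.hasLeftDualOfHasRightDual⟩⟩

theorem hasRightDual_of_jointly_conservative_general {C : Type*} [Category C]
    [MonoidalCategory C] [BraidedCategory C] [MonoidalClosed C]
    {I : Type*} {D : I → Type*} [∀ i, Category (D i)] [∀ i, MonoidalCategory (D i)]
    [∀ i, BraidedCategory (D i)] [∀ i, MonoidalClosed (D i)]
    {F : ∀ i, C ⥤ D i} [∀ i, (F i).Monoidal] (hF : JointlyReflectIsomorphisms F) (M : C)
    [∀ i, IsIso (ihomComparison (F i) M (𝟙_ C))] [∀ i, IsIso (ihomComparison (F i) M M)]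
    (hM : ∀ i, Nonempty (HasRightDual ((F i).obj M))) :
    Nonempty (HasRightDual M) := by
  simp only [← nonempty_hasLeftDual_iff_nonempty_hasRightDual] at hM ⊢
  exact nonempty_hasLeftDual_of_jointlyReflectIsomorphisms hF M hM

/-- Let `C` and the `D i` be closed symmetric monoidal categories, and let
`F i : C ⥤ D i` be a jointly conservative family of strong monoidal functors, each of
which is closed (the internal-hom comparison morphisms are isomorphisms).  If `M : C`
is such that each `F i |>.obj M` has a right dual, then `M` has a right dual. -/
theorem hasRightDual_of_jointly_conservative {C : Type*} [Category C]
    [MonoidalCategory C] [SymmetricCategory C] [MonoidalClosed C]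
    {I : Type*} (D : I → Type*) [∀ i, Category (D i)] [∀ i, MonoidalCategory (D i)]
    [∀ i, SymmetricCategory (D i)] [∀ i, MonoidalClosed (D i)]
    (F : ∀ i, C ⥤ D i) [∀ i, (F i).Monoidal]
    (hclosed : ∀ (i : I) (X Y : C), IsIso (ihomComparison (F i) X Y))
    (hcons : ∀ {X Y : C} (g : X ⟶ Y), (∀ i, IsIso ((F i).map g)) → IsIso g)
    (M : C) (hM : ∀ i, Nonempty (HasRightDual ((F i).obj M))) :
    Nonempty (HasRightDual M) := by
  have hF : JointlyReflectIsomorphisms F := ⟨fun g h => hcons g h⟩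
  exact hasRightDual_of_jointly_conservative_general hF M hM
end

section
/- Let R be a commutative ring. An object M of the monoidal category ModuleCat R (the category of R-modules with the tensor product over R) has a right dual if and only if the underlying R-module M is finitely generated and projective. -/
open CategoryTheory CategoryTheory.MonoidalCategory

/-!
Under the canonical map `Module.Dual R M ⊗ M → End M`, the tensor `∑ fᵢ ⊗ mᵢ` goes to
`x ↦ ∑ fᵢ x • mᵢ`, so the identity lies in its range precisely when `M` has a finite dual basis,
that is, when `M` is finitely generated and projective. If `M` has a right dual `N`, write the
coevaluation at `1` as `∑ mᵢ ⊗ nᵢ`; the zigzag identity on `M` says that the functionals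
`ε (nᵢ ⊗ -)` and the elements `mᵢ` form a dual basis. Conversely, for a dual basis, `∑ mᵢ ⊗ fᵢ` is
the coevaluation of an exact pairing of `M` with its linear dual. This argument takes place in
`SemimoduleCat R`, and right duals transfer along the monoidal equivalence from `ModuleCat R`.
-/

section Contraction

open TensorProduct

variable {R M N : Type*} [CommSemiring R] [AddCommMonoid M] [Module R M]
  [AddCommMonoid N] [Module R N]

theorem rid_lTensor_assoc_tmul (e : N ⊗[R] M →ₗ[R] R) (t : M ⊗[R] N) (m : M) :
    TensorProduct.rid R M (e.lTensor M (TensorProduct.assoc R M N M (t ⊗ₜ m))) =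
      dualTensorHom R M M ((TensorProduct.curry e).rTensor M (TensorProduct.comm R M N t)) m := by
  induction t with
  | zero => simp
  | add x y hx hy => simp only [add_tmul, map_add, hx, hy, LinearMap.add_apply]
  | tmul a n => simp

theorem lid_rTensor_contractLeft_assoc_symm_tmul (f : Module.Dual R M)
    (t : M ⊗[R] Module.Dual R M) :
    TensorProduct.lid R (Module.Dual R M) ((contractLeft R M).rTensor (Module.Dual R M)
        ((TensorProduct.assoc R (Module.Dual R M) M (Module.Dual R M)).symm (f ⊗ₜ t))) =
      f ∘ₗ dualTensorHom R M M (TensorProduct.comm R M (Module.Dual R M) t) := by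
  induction t with
  | zero => simp
  | add x y hx hy => simp only [tmul_add, map_add, hx, hy, LinearMap.comp_add]
  | tmul m g =>
    ext x
    simp [mul_comm]

theorem one_mem_range_dualTensorHom_of_zigzag (c : R →ₗ[R] M ⊗[R] N) (e : N ⊗[R] M →ₗ[R] R)
    (zigzag : e.lTensor M ∘ₗ (TensorProduct.assoc R M N M).toLinearMap ∘ₗ c.rTensor M =
      (TensorProduct.rid R M).symm.toLinearMap ∘ₗ (TensorProduct.lid R M).toLinearMap) :
    1 ∈ (dualTensorHom R M M).range := by
  refine ⟨(TensorProduct.curry e).rTensor M (TensorProduct.comm R M N (c 1)), ?_⟩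
  ext m
  have zigzag_apply : e.lTensor M (TensorProduct.assoc R M N M (c 1 ⊗ₜ m)) = m ⊗ₜ 1 := by
    simpa using LinearMap.congr_fun zigzag (1 ⊗ₜ m)
  rw [← rid_lTensor_assoc_tmul, zigzag_apply]
  simp

section FiniteProjective

variable (R M) [Module.Finite R M] [Module.Projective R M]

/-- The coevaluation of a finitely generated projective module, sending `1` to the tensor
`∑ mᵢ ⊗ fᵢ` of any dual basis. It is encoded without choosing one, as the preimage of the identity
under `dualTensorHomEquiv`. Over a field it is Mathlib's `coevaluation`. -/
noncomputable def dualCoevaluation : R →ₗ[R] M ⊗[R] Module.Dual R M :=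
  LinearMap.toSpanSingleton R _
    ((TensorProduct.comm R _ _) ((dualTensorHomEquiv R M M).symm LinearMap.id))

theorem dualTensorHom_comm_dualCoevaluation_one :
    dualTensorHom R M M (TensorProduct.comm R M _ (dualCoevaluation R M 1)) = LinearMap.id := by
  have comm_one : TensorProduct.comm R M _ (dualCoevaluation R M 1) =
      (dualTensorHomEquiv R M M).symm LinearMap.id := by
    simp [dualCoevaluation, -dualTensorHomEquiv]
  rw [comm_one]
  exact (dualTensorHomEquiv R M M).apply_symm_apply LinearMap.id

theorem contractLeft_assoc_dualCoevaluation :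
    (contractLeft R M).rTensor (Module.Dual R M) ∘ₗ
        (TensorProduct.assoc R _ _ _).symm.toLinearMap ∘ₗ
          (dualCoevaluation R M).lTensor (Module.Dual R M) =
      (TensorProduct.lid R _).symm.toLinearMap ∘ₗ (TensorProduct.rid R _).toLinearMap := by
  rw [LinearEquiv.eq_toLinearMap_symm_comp]
  refine TensorProduct.ext (LinearMap.ext fun f ↦ LinearMap.ext_ring ?_)
  simpa [dualTensorHom_comm_dualCoevaluation_one] using
    lid_rTensor_contractLeft_assoc_symm_tmul f (dualCoevaluation R M 1)

theorem contractLeft_assoc_dualCoevaluation' :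
    (contractLeft R M).lTensor M ∘ₗ (TensorProduct.assoc R _ _ _).toLinearMap ∘ₗ
        (dualCoevaluation R M).rTensor M =
      (TensorProduct.rid R _).symm.toLinearMap ∘ₗ (TensorProduct.lid R _).toLinearMap := by
  have curry_contractLeft : TensorProduct.curry (contractLeft R M) = LinearMap.id := rfl
  rw [LinearEquiv.eq_toLinearMap_symm_comp]
  refine TensorProduct.ext (LinearMap.ext_ring (LinearMap.ext fun m ↦ ?_))
  simpa [curry_contractLeft, dualTensorHom_comm_dualCoevaluation_one] using
    rid_lTensor_assoc_tmul (contractLeft R M) (dualCoevaluation R M 1) m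

end FiniteProjective

end Contraction

/-- The exact pairing of a finitely generated projective module with its linear dual, with
`contractLeft` as evaluation. -/
noncomputable instance exactPairingDual {R : Type*} [CommSemiring R] (M : SemimoduleCat R)
    [Module.Finite R M] [Module.Projective R M] :
    ExactPairing M (SemimoduleCat.of R (Module.Dual R M)) where
  coevaluation' := SemimoduleCat.ofHom (dualCoevaluation R M)
  evaluation' := SemimoduleCat.ofHom (contractLeft R M)
  coevaluation_evaluation' := SemimoduleCat.hom_ext (contractLeft_assoc_dualCoevaluation R M)
  evaluation_coevaluation' := SemimoduleCat.hom_ext (contractLeft_assoc_dualCoevaluation' R M)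

theorem one_mem_range_dualTensorHom_of_exactPairing {R : Type*} [CommSemiring R]
    (M N : SemimoduleCat R) [ExactPairing M N] : 1 ∈ (dualTensorHom R M M).range :=
  one_mem_range_dualTensorHom_of_zigzag (η_ M N).hom (ε_ M N).hom
    (congrArg SemimoduleCat.Hom.hom (ExactPairing.evaluation_coevaluation M N))

theorem exists_exactPairing_functor_obj_iff {C D : Type*} [Category* C] [Category* D]
    [MonoidalCategory C] [MonoidalCategory D] (e : C ≌ D) [e.functor.Monoidal] (X : C) :
    (∃ Y : D, Nonempty (ExactPairing (e.functor.obj X) Y)) ↔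
      ∃ Y : C, Nonempty (ExactPairing X Y) := by
  constructor
  · rintro ⟨Y, ⟨_⟩⟩
    let : HasRightDual (e.functor.obj X) := ⟨Y⟩
    let := hasRightDualOfEquivalence e.toAdjunction X
    exact ⟨Xᘁ, ⟨inferInstance⟩⟩
  · rintro ⟨Y, ⟨_⟩⟩
    let : e.symm.functor.Monoidal := e.inverseMonoidal
    let : ExactPairing (e.symm.functor.obj (e.functor.obj X)) Y :=
      exactPairingCongrLeft (X' := X) (e.unitIso.app X).symm
    let : HasRightDual (e.symm.functor.obj (e.functor.obj X)) := ⟨Y⟩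
    let := hasRightDualOfEquivalence e.symm.toAdjunction (e.functor.obj X)
    exact ⟨(e.functor.obj X)ᘁ, ⟨inferInstance⟩⟩

theorem moduleCat_hasRightDual_iff_finite_projective_general (R : Type*) [CommSemiring R]
    (M : SemimoduleCat R) :
    (∃ N : SemimoduleCat R, Nonempty (ExactPairing M N)) ↔
      (Module.Finite R M ∧ Module.Projective R M) := by
  constructor
  · rintro ⟨N, ⟨_⟩⟩
    have one_mem_range := one_mem_range_dualTensorHom_of_exactPairing M N
    exact ⟨.of_one_mem_range_dualTensorHom one_mem_range,
      .of_one_mem_range_dualTensorHom one_mem_range⟩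
  · rintro ⟨_, _⟩
    exact ⟨_, ⟨exactPairingDual M⟩⟩

/-- An object `M` of the monoidal category `ModuleCat R` (modules over a commutative ring
`R` with the tensor product) has a right dual if and only if the underlying module is
finitely generated and projective. -/
theorem moduleCat_hasRightDual_iff_finite_projective (R : Type*) [CommRing R]
    (M : ModuleCat R) :
    (∃ N : ModuleCat R, Nonempty (ExactPairing M N)) ↔
      (Module.Finite R M ∧ Module.Projective R M) :=
  (exists_exactPairing_functor_obj_iff ModuleCat.equivalenceSemimoduleCat M).symm.trans
    (moduleCat_hasRightDual_iff_finite_projective_general R (SemimoduleCat.of R M))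
end

section
/- Let A be a type and (M a)_{a ∈ A} a family of abelian groups (ℤ-modules). The direct sum ⨁_{a ∈ A} M a is a finitely generated projective ℤ-module if and only if each M a is finitely generated and projective and M a is the zero group for all but finitely many a, i.e. the set {a : A | M a ≠ 0} is finite. -/
open DirectSum

/-!
The summands are retracts of the direct sum, so they inherit finite generation and projectivity.
Each of finitely many generators of the direct sum has finite support, and on every nonzero summand
some generator has a nonzero component, so only finitely many summands are nonzero. Conversely, the
direct sum is the supremum of the finitely many nonzero summands, hence finitely generated, and any
direct sum of projective modules is projective.
-/

theorem exists_mem_apply_ne_zero_of_span_eq_top {R S M N : Type*} [Semiring R] [Semiring S]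
    {σ : R →+* S} [AddCommMonoid M] [Module R M] [AddCommMonoid N] [Module S N]
    {f : M →ₛₗ[σ] N} (hf : f ≠ 0) {s : Set M} (hs : Submodule.span R s = ⊤) :
    ∃ x ∈ s, f x ≠ 0 := by
  contrapose! hf
  exact LinearMap.ext_on hs hf

section

variable (R : Type*) [Semiring R] {A : Type*} (M : A → Type*) [∀ a, AddCommMonoid (M a)]
  [∀ a, Module R (M a)]

theorem directSum_component_surjective (a : A) :
    Function.Surjective (DirectSum.component R A M a) := by
  classical
  exact Function.RightInverse.surjective (DirectSum.component.lof_self R a)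

theorem directSum_component_ne_zero (a : A) [Nontrivial (M a)] :
    DirectSum.component R A M a ≠ 0 := by
  obtain ⟨y, hy⟩ := exists_ne (0 : M a)
  obtain ⟨x, rfl⟩ := directSum_component_surjective R M a y
  exact DFunLike.ne_iff.mpr ⟨x, hy⟩

theorem iSup_range_directSum_lof [DecidableEq A] :
    ⨆ a, LinearMap.range (DirectSum.lof R A M a) = ⊤ := by
  refine eq_top_iff.mpr fun x _ => ?_
  induction x using DirectSum.induction_on with
  | zero => exact zero_mem _
  | of a x => exact Submodule.mem_iSup_of_mem a ⟨x, rfl⟩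
  | add x y hx hy => exact add_mem (hx trivial) (hy trivial)

theorem finite_setOf_nontrivial_of_finite_directSum [Module.Finite R (⨁ a, M a)] :
    {a | Nontrivial (M a)}.Finite := by
  obtain ⟨s, hs⟩ := Module.Finite.fg_top (R := R) (M := ⨁ a, M a)
  have hsupp : (⋃ x ∈ s, {a | x a ≠ 0}).Finite :=
    s.finite_toSet.biUnion fun x _ => DFinsupp.finite_support x
  refine hsupp.subset fun a (_ : Nontrivial (M a)) => ?_
  obtain ⟨x, hx, hxa⟩ :=
    exists_mem_apply_ne_zero_of_span_eq_top (directSum_component_ne_zero R M a) hs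
  exact Set.mem_biUnion hx hxa

theorem finite_directSum_of_finite_setOf_nontrivial [∀ a, Module.Finite R (M a)]
    (hM : {a | Nontrivial (M a)}.Finite) : Module.Finite R (⨁ a, M a) := by
  classical
  have hrange : {a | LinearMap.range (DirectSum.lof R A M a) ≠ ⊥}.Finite := by
    refine hM.subset fun a ha => ?_
    contrapose! ha
    have : Subsingleton (M a) := not_nontrivial_iff_subsingleton.mp ha
    exact not_not.mpr (LinearMap.range_eq_bot.mpr (Subsingleton.elim _ _))
  have : Finite {a // LinearMap.range (DirectSum.lof R A M a) ≠ ⊥} := hrange.to_subtype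
  refine ⟨?_⟩
  rw [← iSup_range_directSum_lof, ← iSup_ne_bot_subtype]
  exact Submodule.fg_iSup _ fun a => Module.Finite.iff_fg.mp inferInstance

theorem finite_directSum_iff :
    Module.Finite R (⨁ a, M a) ↔
      (∀ a, Module.Finite R (M a)) ∧ {a | Nontrivial (M a)}.Finite where
  mp _ := ⟨fun a => .of_surjective _ (directSum_component_surjective R M a),
    finite_setOf_nontrivial_of_finite_directSum R M⟩
  mpr := fun ⟨_, hM⟩ => finite_directSum_of_finite_setOf_nontrivial R M hM

theorem directSum_finite_projective_iff_general :
    (Module.Finite R (⨁ a, M a) ∧ Module.Projective R (⨁ a, M a)) ↔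
      ((∀ a, Module.Finite R (M a) ∧ Module.Projective R (M a)) ∧
        {a : A | ∃ x : M a, x ≠ 0}.Finite) := by
  simp only [finite_directSum_iff, Module.Projective.directSum_iff, forall_and,
    nontrivial_iff_exists_ne (0 : M _), and_right_comm]

end

/-- A direct sum `⨁ a, M a` of a family of abelian groups (`ℤ`-modules) is a finitely
generated projective `ℤ`-module if and only if each `M a` is finitely generated and
projective and all but finitely many `M a` are zero. -/
theorem directSum_finite_projective_iff {A : Type*} [DecidableEq A] (M : A → Type*)
    [∀ a, AddCommGroup (M a)] [∀ a, Module ℤ (M a)] :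
    (Module.Finite ℤ (⨁ a, M a) ∧ Module.Projective ℤ (⨁ a, M a)) ↔
      ((∀ a, Module.Finite ℤ (M a) ∧ Module.Projective ℤ (M a)) ∧
        {a : A | ∃ x : M a, x ≠ 0}.Finite) := by
  -- `Module ℤ (⨁ a, M a)` is found through `AddCommGroup.toIntModule`, not componentwise.
  convert directSum_finite_projective_iff_general ℤ M <;> exact Subsingleton.elim _ _
end

section
/- Let k be a commutative ring and G a group. The quotient of the group algebra k[G] = MonoidAlgebra k G by the k-submodule spanned by all commutators x*y − y*x (for x, y ∈ k[G]) is isomorphic as a k-module to the free k-module (ConjClasses G →₀ k) on the set of conjugacy classes of G, via the k-linear isomorphism induced by sending the basis element of a group element g to the basis element of its conjugacy class ⟦g⟧. -/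
/-!
A linear map on `k[G]` kills all commutators as soon as it takes equal values on `gh` and `hg`
for all `g, h : G`, by bilinearity. In a group `gh` and `hg` are conjugate, so `g ↦ ⟦g⟧` descends
to the quotient by commutators. Conversely, conjugate elements `a` and `b = uau⁻¹` of any algebra
differ by the commutator of `u⁻¹` and `ua`, so `⟦g⟧ ↦ g` is a well-defined inverse.
-/

section Commutator

variable (R A : Type*) [Semiring R]

/-- The `R`-submodule `[A, A]` of an `R`-algebra `A` spanned by the commutators `x * y - y * x`.
The quotient by it is the target of the universal `R`-linear trace on `A`. It is a submodule, in
general not an ideal. -/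
def commutatorSubmodule [NonUnitalNonAssocRing A] [Module R A] : Submodule R A :=
  Submodule.span R {z : A | ∃ x y : A, z = x * y - y * x}

variable {R A}

theorem mul_sub_mul_mem_commutatorSubmodule [NonUnitalNonAssocRing A] [Module R A] (x y : A) :
    x * y - y * x ∈ commutatorSubmodule R A :=
  Submodule.subset_span ⟨x, y, rfl⟩

theorem commutatorSubmodule_le_ker_iff [NonUnitalNonAssocRing A] [Module R A]
    {N : Type*} [AddCommGroup N] [Module R N] {f : A →ₗ[R] N} :
    commutatorSubmodule R A ≤ LinearMap.ker f ↔ ∀ x y : A, f (x * y) = f (y * x) := by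
  constructor
  · intro h x y
    rw [← sub_eq_zero, ← map_sub]
    exact h (mul_sub_mul_mem_commutatorSubmodule x y)
  · intro h
    refine Submodule.span_le.2 ?_
    rintro _ ⟨x, y, rfl⟩
    simp only [SetLike.mem_coe, LinearMap.mem_ker, map_sub, h x y, sub_self]

theorem sub_mem_commutatorSubmodule_of_isConj [Ring A] [Module R A] {a b : A}
    (h : IsConj a b) : a - b ∈ commutatorSubmodule R A := by
  obtain ⟨u, hu⟩ := h
  have ha : ↑u⁻¹ * (u * a) = a := u.inv_mul_cancel_left a
  have hb : u * a * ↑u⁻¹ = b := by rw [hu.eq, u.mul_inv_cancel_right]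
  simpa only [ha, hb] using mul_sub_mul_mem_commutatorSubmodule (R := R) (↑u⁻¹ : A) (u * a)

end Commutator

section ConjClasses

theorem isConj_mul_comm {G : Type*} [Group G] (g h : G) : IsConj (g * h) (h * g) :=
  isConj_iff.2 ⟨h, by group⟩

/-- The canonical map from the conjugacy classes of an algebra `A` to `A ⧸ [A, A]`. It is well
defined because conjugate elements differ by a commutator. -/
def conjClassesToCommutatorQuotient (R A : Type*) [Ring R] [Ring A] [Module R A] :
    ConjClasses A → A ⧸ commutatorSubmodule R A :=
  Quotient.lift Submodule.Quotient.mk fun _ _ h ↦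
    (Submodule.Quotient.eq _).2 (sub_mem_commutatorSubmodule_of_isConj h)

end ConjClasses

section MonoidAlgebra

theorem monoidAlgebra_map_mul_comm_iff {k G N : Type*} [CommSemiring k] [Mul G]
    [AddCommMonoid N] [Module k N] {f : MonoidAlgebra k G →ₗ[k] N} :
    (∀ x y : MonoidAlgebra k G, f (x * y) = f (y * x)) ↔
      ∀ g h : G, f (.single (g * h) 1) = f (.single (h * g) 1) := by
  constructor
  · intro hf g h
    simpa using hf (.single g 1) (.single h 1)
  · intro hf x y
    have hmul : (LinearMap.mul k (MonoidAlgebra k G)).compr₂ f =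
        (LinearMap.mul k (MonoidAlgebra k G)).flip.compr₂ f := by
      ext g h
      simpa using hf g h
    exact LinearMap.congr_fun₂ hmul x y

/-- The linear map `k[G] → k[ConjClasses G]` sending each monoid element to its conjugacy class;
its coefficients are the sums of the coefficients over the conjugacy classes. -/
noncomputable def toConjClassesFinsupp (k G : Type*) [Semiring k] [Monoid G] :
    MonoidAlgebra k G →ₗ[k] (ConjClasses G →₀ k) :=
  Finsupp.lmapDomain k k ConjClasses.mk ∘ₗ (MonoidAlgebra.coeffLinearEquiv k).toLinearMap

theorem toConjClassesFinsupp_single {k G : Type*} [Semiring k] [Monoid G] (g : G) (r : k) :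
    toConjClassesFinsupp k G (.single g r) = Finsupp.single (ConjClasses.mk g) r := by
  simp [toConjClassesFinsupp]

theorem toConjClassesFinsupp_mul_comm {k G : Type*} [CommSemiring k] [Group G]
    (x y : MonoidAlgebra k G) :
    toConjClassesFinsupp k G (x * y) = toConjClassesFinsupp k G (y * x) := by
  refine monoidAlgebra_map_mul_comm_iff.2 (fun g h ↦ ?_) x y
  rw [toConjClassesFinsupp_single, toConjClassesFinsupp_single,
    ConjClasses.mk_eq_mk_iff_isConj.2 (isConj_mul_comm g h)]

/-- The linear map `k[G] ⧸ [k[G], k[G]] → k[ConjClasses G]` induced by `g ↦ ⟦g⟧`. -/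
noncomputable def commutatorQuotientToFinsupp (k G : Type*) [CommRing k] [Group G] :
    (MonoidAlgebra k G ⧸ commutatorSubmodule k (MonoidAlgebra k G)) →ₗ[k] (ConjClasses G →₀ k) :=
  (commutatorSubmodule k (MonoidAlgebra k G)).liftQ (toConjClassesFinsupp k G)
    (commutatorSubmodule_le_ker_iff.2 toConjClassesFinsupp_mul_comm)

theorem commutatorQuotientToFinsupp_mk_single {k G : Type*} [CommRing k] [Group G] (g : G)
    (r : k) :
    commutatorQuotientToFinsupp k G (Submodule.Quotient.mk (.single g r)) =
      Finsupp.single (ConjClasses.mk g) r :=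
  toConjClassesFinsupp_single g r

/-- The linear map `k[ConjClasses G] → k[G] ⧸ [k[G], k[G]]` induced by `⟦g⟧ ↦ g`. -/
noncomputable def finsuppToCommutatorQuotient (k G : Type*) [Ring k] [Monoid G] :
    (ConjClasses G →₀ k) →ₗ[k] (MonoidAlgebra k G ⧸ commutatorSubmodule k (MonoidAlgebra k G)) :=
  Finsupp.linearCombination k
    (conjClassesToCommutatorQuotient k (MonoidAlgebra k G) ∘
      ConjClasses.map (MonoidAlgebra.of k G))

theorem finsuppToCommutatorQuotient_single {k G : Type*} [Ring k] [Monoid G] (g : G) (r : k) :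
    finsuppToCommutatorQuotient k G (Finsupp.single (ConjClasses.mk g) r) =
      Submodule.Quotient.mk (.single g r) :=
  calc
    finsuppToCommutatorQuotient k G (Finsupp.single (ConjClasses.mk g) r) =
        r • Submodule.Quotient.mk (MonoidAlgebra.of k G g) :=
      Finsupp.linearCombination_single k r (ConjClasses.mk g)
    _ = Submodule.Quotient.mk (.single g r) := by
      rw [← Submodule.Quotient.mk_smul, MonoidAlgebra.of_apply, MonoidAlgebra.smul_single,
        smul_eq_mul, mul_one]

/-- The shadow of a group ring: `k[G] ⧸ [k[G], k[G]]` is free on the conjugacy classes of `G`. -/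
noncomputable def commutatorQuotientEquivFinsupp (k G : Type*) [CommRing k] [Group G] :
    (MonoidAlgebra k G ⧸ commutatorSubmodule k (MonoidAlgebra k G)) ≃ₗ[k] (ConjClasses G →₀ k) :=
  LinearEquiv.ofLinearMap (commutatorQuotientToFinsupp k G) (finsuppToCommutatorQuotient k G)
    (Finsupp.lhom_ext fun c r ↦ by
      obtain ⟨g, rfl⟩ := ConjClasses.exists_rep c
      simp only [LinearMap.comp_apply, LinearMap.id_apply, finsuppToCommutatorQuotient_single,
        commutatorQuotientToFinsupp_mk_single])
    (by
      ext g
      simp [commutatorQuotientToFinsupp_mk_single, finsuppToCommutatorQuotient_single])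

end MonoidAlgebra

/-- For a commutative ring `k` and a group `G`, the quotient of the group algebra
`k[G]` by the `k`-submodule spanned by all commutators `x*y - y*x` is isomorphic, as a
`k`-module, to the free `k`-module on the set of conjugacy classes of `G`, via the map
induced by `g ↦ ⟦g⟧`. -/
theorem groupAlgebra_quotient_commutators_equiv_conjClasses (k : Type*) [CommRing k]
    (G : Type*) [Group G] :
    ∃ e : (MonoidAlgebra k G ⧸ Submodule.span k
          {z : MonoidAlgebra k G | ∃ x y : MonoidAlgebra k G, z = x * y - y * x})
        ≃ₗ[k] (ConjClasses G →₀ k),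
      ∀ g : G,
        e (Submodule.Quotient.mk (MonoidAlgebra.of k G g)) =
          Finsupp.single (ConjClasses.mk g) 1 :=
  ⟨commutatorQuotientEquivFinsupp k G, fun g ↦ commutatorQuotientToFinsupp_mk_single g 1⟩
end

section
/- Let C be a connected groupoid (any two objects of C are isomorphic) and x an object of C, with automorphism group Aut x = (x ≅ x). On the set L = Σ (y : C), (y ⟶ y) of all loops of C, define (y, γ) ∼ (z, δ) if and only if there exists α : y ⟶ z with γ ≫ α = α ≫ δ. Then ∼ is an equivalence relation, and the map sending the conjugacy class of g ∈ Aut x to the ∼-class of (x, g) is a well-defined bijection ConjClasses (Aut x) ≃ L/∼. -/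
open CategoryTheory

/-- Conjugacy of loops at possibly different objects, witnessed by a morphism intertwining them.
The intertwiner is not required to be invertible, so outside groupoids this relation need not be
symmetric. -/
def LoopConj {C : Type*} [Category C] (p q : Σ y : C, (y ⟶ y)) : Prop :=
  ∃ α : p.1 ⟶ q.1, p.2 ≫ α = α ≫ q.2

/-- Conjugacy classes of loops of `C`. Outside groupoids the quotient is by the equivalence
relation generated by `LoopConj`. -/
def LoopClasses (C : Type*) [Category C] : Type _ :=
  Quot (LoopConj (C := C))

namespace LoopConj

section Category

variable {C : Type*} [Category C]

theorem refl (p : Σ y : C, (y ⟶ y)) : LoopConj p p :=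
  ⟨𝟙 p.1, by rw [Category.comp_id, Category.id_comp]⟩

theorem trans {p q r : Σ y : C, (y ⟶ y)} : LoopConj p q → LoopConj q r → LoopConj p r := by
  rintro ⟨α, hα⟩ ⟨β, hβ⟩
  refine ⟨α ≫ β, ?_⟩
  calc
    p.2 ≫ α ≫ β = α ≫ q.2 ≫ β := by rw [reassoc_of% hα]
    _ = (α ≫ β) ≫ r.2 := by rw [hβ, Category.assoc]

theorem of_isConj {x : C} {g h : Aut x} :
    IsConj g h → LoopConj ⟨x, g.hom⟩ ⟨x, h.hom⟩ := by
  rintro ⟨c, hc⟩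
  exact ⟨(c : Aut x).hom, congrArg Iso.hom hc⟩

theorem conj_left {x y : C} (i : y ≅ x) (γ : y ⟶ y) : LoopConj ⟨x, i.conj γ⟩ ⟨y, γ⟩ :=
  ⟨i.inv, by simp [Iso.conj_apply]⟩

end Category

section Groupoid

variable {C : Type*} [Groupoid C]

theorem symm {p q : Σ y : C, (y ⟶ y)} : LoopConj p q → LoopConj q p := by
  rintro ⟨α, hα⟩
  refine ⟨inv α, ?_⟩
  rw [IsIso.eq_inv_comp, ← Category.assoc, ← hα, Category.assoc, IsIso.hom_inv_id,
    Category.comp_id]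

theorem equivalence (C : Type*) [Groupoid C] : Equivalence (LoopConj (C := C)) :=
  ⟨refl, symm, trans⟩

theorem iff_isConj {x : C} {g h : Aut x} :
    LoopConj ⟨x, g.hom⟩ ⟨x, h.hom⟩ ↔ IsConj g h := by
  refine ⟨?_, of_isConj⟩
  rintro ⟨α, hα⟩
  let c : Aut x := asIso α
  -- `Aut x` multiplies in the order of function composition, so `hα` reads `c * g = h * c`.
  exact ⟨toUnits c, Aut.ext hα⟩

end Groupoid

end LoopConj

namespace LoopClasses

/-- The map from conjugacy classes of automorphisms of `x` to conjugacy classes of loops, sending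
the class of `g` to that of the loop `(x, g.hom)`. -/
def ofConjClasses {C : Type*} [Category C] (x : C) : ConjClasses (Aut x) → LoopClasses C :=
  Quotient.lift (fun g => Quot.mk _ ⟨x, g.hom⟩) fun _ _ hgh => Quot.sound (.of_isConj hgh)

variable {C : Type*} [Groupoid C]

theorem ofConjClasses_injective (x : C) : Function.Injective (ofConjClasses x) := by
  rintro ⟨g⟩ ⟨h⟩ hgh
  have hconj : LoopConj ⟨x, g.hom⟩ ⟨x, h.hom⟩ :=
    ((LoopConj.equivalence C).quot_mk_eq_iff _ _).1 hgh
  exact ConjClasses.mk_eq_mk_iff_isConj.2 (LoopConj.iff_isConj.1 hconj)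

theorem ofConjClasses_surjective {x : C} (hx : ∀ y : C, Nonempty (y ≅ x)) :
    Function.Surjective (ofConjClasses x) := by
  rintro ⟨y, γ⟩
  obtain ⟨i⟩ := hx y
  let g : Aut x := asIso (i.conj γ)
  exact ⟨ConjClasses.mk g, Quot.sound (.conj_left i γ)⟩

end LoopClasses

/-- Let `C` be a connected groupoid and `x : C`.  On the set `L = Σ y, (y ⟶ y)` of all
loops of `C`, the relation `(y, γ) ∼ (z, δ) ↔ ∃ α : y ⟶ z, γ ≫ α = α ≫ δ` is an
equivalence relation, and sending the conjugacy class of `g ∈ Aut x` to the class of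
the loop `(x, g.hom)` is a well-defined bijection from `ConjClasses (Aut x)` to the
quotient `L/∼`. -/
theorem conjClasses_aut_equiv_loopClasses (C : Type*) [Groupoid C]
    (hconn : ∀ y z : C, Nonempty (y ≅ z)) (x : C) :
    Equivalence (fun p q : Σ y : C, (y ⟶ y) =>
        ∃ α : p.1 ⟶ q.1, p.2 ≫ α = α ≫ q.2) ∧
      ∃ e : ConjClasses (Aut x) ≃
          Quot (fun p q : Σ y : C, (y ⟶ y) => ∃ α : p.1 ⟶ q.1, p.2 ≫ α = α ≫ q.2),
        ∀ g : Aut x, e (ConjClasses.mk g) = Quot.mk _ ⟨x, g.hom⟩ := by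
  refine ⟨LoopConj.equivalence C, Equiv.ofBijective (LoopClasses.ofConjClasses x) ⟨?_, ?_⟩,
    fun _ => rfl⟩
  · exact LoopClasses.ofConjClasses_injective x
  · exact LoopClasses.ofConjClasses_surjective fun y => hconn y x
end
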